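/- Let s, t ∈ ℂ satisfy t³ − 21t + 37 = 0 and s^{18} = 26220t² + 67488t − 376912, and let d¹ be the 2×2 matrix over R = ℂ[u,v,x,y] with entries a = v − ((t² − 10t + 19)/2)·(s·u)⁹ + (t − 2)·y·(s·u)⁵ + y²·(s·u), b = −x + (2t − 5)·(s·u)⁶ + y·(s·u)², c = x² + y³ + (2t − 5)²·(s·u)^{12} + (2t − 5)·x·(s·u)⁶ + 2(2t − 5)·y·(s·u)⁸ + x·y·(s·u)² + y²·(s·u)⁴, d = −v − ((t² − 10t + 19)/2)·(s·u)⁹ + (t − 2)·y·(s·u)⁵ + y²·(s·u); set d⁰ = adjugate(d¹) and let d = [[0, d¹], [d⁰, 0]] be the 4×4 twisted differential of the resulting matrix factorisation of x³ + x·y³ − u^{18} − v². Let 𝔈 be the ℂ-vector space of 4×4 matrices F over R of block-diagonal form F = [[f⁰, 0], [0, f¹]] (with 2×2 blocks) satisfying d·F = F·d, and let 𝔑 ⊆ 𝔈 be the subspace of all matrices of the form d·H + H·d, where H ranges over 4×4 matrices over R of block off-diagonal form [[0, h¹], [h⁰, 0]]. Then the quotient ℂ-vector space 𝔈/𝔑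 (the space of even endomorphisms of the matrix factorisation up to homotopy) has dimension 27. -/

import Mathlib

/-!
Write `w = s u`, `p = (2t - 5) w⁶ + y w²` and `g = y² w + (t - 2) y w⁵ - e w⁹` with
`e = (t² - 10 t + 19) / 2`, so that `d¹ = [[v + g, p - x], [x² + x p + p² + y³, g - v]]`.

*Every even endomorphism is homotopic to a scalar.* Up to a sign in the second column, `d¹` is the
monic matrix polynomial `v + φ` in `v`, with `φ` a trace-zero matrix over `ℂ[u,x,y]`. Dividing
`f⁰` on the left by `v + φ` leaves a constant remainder commuting with `φ`
(`exists_commute_remainder`). As `p - x` is coprime to `g`, the commutant of `φ` consists of the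
matrices `α + β φ` (`commute_trace_zero`), which are congruent to `α - β v` modulo `v + φ`. The
quotient of the division is the homotopy.

*The null-homotopic scalars* are the elements of the ideal `I` generated by the entries of `d¹`
(`smul_one_mem_nullHtpy`). Hence `𝔈/𝔑 ≅ R / I`.

*The dimension of `R / I`.* The generators allow `v = 0` and `x = p` to be eliminated, which leaves
`ℂ[w,y] / (g, q)` with `q = y³ + 3 p²` (`elimVX_mem_iff`). The `ℂ[w]`-module `ℂ[w,y] / (q)` is free
of rank three, and in the basis `y² + (t - 2) w⁴ y - e w⁸`, `y + (13 - 5t) w⁴`, `1` the ideal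
generated by `g` is diagonal with elementary divisors `w`, `w⁹`, `w¹⁷`
(`mem_span_iff_mem_latticeP`); the coefficient `13 - 5t` and the invertibility of the scalars that
occur come from the cubic equation for `t`. The dimension is therefore `1 + 9 + 17 = 27`.
-/

open MvPolynomial

noncomputable section

/-- The polynomial ring `R = ℂ[u,v,x,y]`. -/
abbrev R4 : Type := MvPolynomial (Fin 4) ℂ

def u : R4 := X 0
def v : R4 := X 1
def x : R4 := X 2
def y : R4 := X 3

/-- The matrix `d¹` of the E₇ orbifold equivalence. -/
def dE7 (s t : ℂ) : Matrix (Fin 2) (Fin 2) R4 :=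
  !![v - C ((t^2 - 10*t + 19)/2) * (C s * u) ^ 9 + C (t - 2) * y * (C s * u) ^ 5
       + y ^ 2 * (C s * u),
     -x + C (2*t - 5) * (C s * u) ^ 6 + y * (C s * u) ^ 2;
     x ^ 2 + y ^ 3 + C ((2*t - 5)^2) * (C s * u) ^ 12 + C (2*t - 5) * x * (C s * u) ^ 6
       + C (2*(2*t - 5)) * y * (C s * u) ^ 8 + x * y * (C s * u) ^ 2 + y ^ 2 * (C s * u) ^ 4,
     -v - C ((t^2 - 10*t + 19)/2) * (C s * u) ^ 9 + C (t - 2) * y * (C s * u) ^ 5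
       + y ^ 2 * (C s * u)]

/-- The twisted differential `d = [[0, d¹], [d⁰, 0]]` with `d⁰` the adjugate of `d¹`. -/
def DE7 (s t : ℂ) : Matrix (Fin 2 ⊕ Fin 2) (Fin 2 ⊕ Fin 2) R4 :=
  Matrix.fromBlocks 0 (dE7 s t) (dE7 s t).adjugate 0

section Blocks

variable {F G : Matrix (Fin 2 ⊕ Fin 2) (Fin 2 ⊕ Fin 2) R4} {c : ℂ}

lemma tb11_add : (F + G).toBlocks₁₁ = F.toBlocks₁₁ + G.toBlocks₁₁ := rfl
lemma tb12_add : (F + G).toBlocks₁₂ = F.toBlocks₁₂ + G.toBlocks₁₂ := rfl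
lemma tb21_add : (F + G).toBlocks₂₁ = F.toBlocks₂₁ + G.toBlocks₂₁ := rfl
lemma tb22_add : (F + G).toBlocks₂₂ = F.toBlocks₂₂ + G.toBlocks₂₂ := rfl
lemma tb11_smul : (c • F).toBlocks₁₁ = c • F.toBlocks₁₁ := rfl
lemma tb12_smul : (c • F).toBlocks₁₂ = c • F.toBlocks₁₂ := rfl
lemma tb21_smul : (c • F).toBlocks₂₁ = c • F.toBlocks₂₁ := rfl
lemma tb22_smul : (c • F).toBlocks₂₂ = c • F.toBlocks₂₂ := rfl

end Blocks

/-- The ℂ-vector space `𝔈` of even (block-diagonal) endomorphisms commuting with `D`. -/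
def EvenEnd (D : Matrix (Fin 2 ⊕ Fin 2) (Fin 2 ⊕ Fin 2) R4) :
    Submodule ℂ (Matrix (Fin 2 ⊕ Fin 2) (Fin 2 ⊕ Fin 2) R4) where
  carrier := {F | F.toBlocks₁₂ = 0 ∧ F.toBlocks₂₁ = 0 ∧ D * F = F * D}
  zero_mem' := ⟨rfl, rfl, by simp⟩
  add_mem' := by
    rintro F G ⟨hF1, hF2, hF3⟩ ⟨hG1, hG2, hG3⟩
    exact ⟨by rw [tb12_add, hF1, hG1, add_zero],
           by rw [tb21_add, hF2, hG2, add_zero],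
           by rw [Matrix.mul_add, hF3, hG3, Matrix.add_mul]⟩
  smul_mem' := by
    rintro c F ⟨h1, h2, h3⟩
    exact ⟨by rw [tb12_smul, h1, smul_zero],
           by rw [tb21_smul, h2, smul_zero],
           by rw [Matrix.mul_smul, h3, Matrix.smul_mul]⟩

/-- The subspace `𝔑` of null-homotopic even endomorphisms `D·H + H·D`
with `H` block off-diagonal. -/
def NullHtpy (D : Matrix (Fin 2 ⊕ Fin 2) (Fin 2 ⊕ Fin 2) R4) :
    Submodule ℂ (Matrix (Fin 2 ⊕ Fin 2) (Fin 2 ⊕ Fin 2) R4) where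
  carrier := {F | ∃ H, H.toBlocks₁₁ = 0 ∧ H.toBlocks₂₂ = 0 ∧ F = D * H + H * D}
  zero_mem' := ⟨0, rfl, rfl, by simp⟩
  add_mem' := by
    rintro F G ⟨H, h1, h2, h3⟩ ⟨K, k1, k2, k3⟩
    exact ⟨H + K, by rw [tb11_add, h1, k1, add_zero],
           by rw [tb22_add, h2, k2, add_zero],
           by rw [h3, k3, Matrix.mul_add, Matrix.add_mul]; abel⟩
  smul_mem' := by
    rintro c F ⟨H, h1, h2, h3⟩
    exact ⟨c • H, by rw [tb11_smul, h1, smul_zero],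
           by rw [tb22_smul, h2, smul_zero],
           by rw [h3, smul_add, Matrix.mul_smul, Matrix.smul_mul]⟩


/-! ### The quotient of `ℂ[w][y]` by the ideal `(g, q)` -/

/-- The polynomial `q = y³ + 3 (y w² + m w⁶)²` in `ℂ[w][y]`. -/
def qP (m : ℂ) : Polynomial (Polynomial ℂ) :=
  Polynomial.X ^ 3 + Polynomial.C (3 * Polynomial.X ^ 4) * Polynomial.X ^ 2
    + Polynomial.C (6 * Polynomial.C m * Polynomial.X ^ 8) * Polynomial.X
    + Polynomial.C (3 * Polynomial.C m ^ 2 * Polynomial.X ^ 12)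

/-- The polynomial `g = w (y² + n y w⁴ - e w⁸)` in `ℂ[w][y]`. -/
def gP (e n : ℂ) : Polynomial (Polynomial ℂ) :=
  Polynomial.C Polynomial.X * Polynomial.X ^ 2
    + Polynomial.C (Polynomial.C n * Polynomial.X ^ 5) * Polynomial.X
    - Polynomial.C (Polynomial.C e * Polynomial.X ^ 9)

lemma qP_monic (m : ℂ) : (qP m).Monic := by
  unfold qP; monicity!

lemma qP_degree (m : ℂ) : (qP m).degree = 3 := by
  unfold qP; compute_degree!

/-- Elements of `ℂ[w][y]` of degree at most two in `y`, given by their coefficients. -/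
def quadP (a₂ a₁ a₀ : Polynomial ℂ) : Polynomial (Polynomial ℂ) :=
  Polynomial.C a₂ * Polynomial.X ^ 2 + Polynomial.C a₁ * Polynomial.X + Polynomial.C a₀

lemma quadP_modByMonic (m : ℂ) (a₂ a₁ a₀ : Polynomial ℂ) :
    quadP a₂ a₁ a₀ %ₘ qP m = quadP a₂ a₁ a₀ := by
  rw [Polynomial.modByMonic_eq_self_iff (qP_monic m), qP_degree]
  exact lt_of_le_of_lt Polynomial.degree_quadratic_le (by norm_num)

lemma exists_quadP (m : ℂ) (P : Polynomial (Polynomial ℂ)) :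
    ∃ Q a₂ a₁ a₀, P = qP m * Q + quadP a₂ a₁ a₀ := by
  have hdeg : (P %ₘ qP m).degree ≤ 2 := by
    have h := Polynomial.degree_modByMonic_lt P (qP_monic m)
    rw [qP_degree] at h
    exact Order.le_of_lt_succ h
  refine ⟨P /ₘ qP m, (P %ₘ qP m).coeff 2, (P %ₘ qP m).coeff 1, (P %ₘ qP m).coeff 0, ?_⟩
  conv_lhs => rw [← Polynomial.modByMonic_add_div P (qP m)]
  rw [add_comm]
  congr 1
  exact Polynomial.eq_quadratic_of_degree_le_two hdeg

/-- The remainder modulo `q`, written in the `ℂ[w]`-basis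
`y² + n w⁴ y - e w⁸`, `y + κ w⁴`, `1` of the polynomials of degree at most two. In this basis
the ideal `(g, q)` becomes diagonal. -/
def coordP (e m n κ : ℂ) : Polynomial (Polynomial ℂ) →ₗ[Polynomial ℂ]
    Polynomial ℂ × Polynomial ℂ × Polynomial ℂ :=
  let a (i : ℕ) := (Polynomial.lcoeff (Polynomial ℂ) i).comp (Polynomial.modByMonicHom (qP m))
  let l₂ := a 1 - (Polynomial.C n * Polynomial.X ^ 4) • a 2
  (a 2).prod (l₂.prod
    (a 0 + (Polynomial.C e * Polynomial.X ^ 8) • a 2 - (Polynomial.C κ * Polynomial.X ^ 4) • l₂))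

lemma coordP_apply (e m n κ : ℂ) (Q : Polynomial (Polynomial ℂ)) (a₂ a₁ a₀ : Polynomial ℂ) :
    coordP e m n κ (qP m * Q + quadP a₂ a₁ a₀) =
      (a₂, a₁ - Polynomial.C n * Polynomial.X ^ 4 * a₂,
        a₀ + Polynomial.C e * Polynomial.X ^ 8 * a₂
          - Polynomial.C κ * Polynomial.X ^ 4 * (a₁ - Polynomial.C n * Polynomial.X ^ 4 * a₂)) := by
  have h : (qP m * Q + quadP a₂ a₁ a₀) %ₘ qP m = quadP a₂ a₁ a₀ := by
    rw [Polynomial.add_modByMonic, quadP_modByMonic, Polynomial.self_mul_modByMonic (qP_monic m),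
      zero_add]
  have h0 : (quadP a₂ a₁ a₀).coeff 0 = a₀ := by simp [quadP]
  have h1 : (quadP a₂ a₁ a₀).coeff 1 = a₁ := by simp [quadP, Polynomial.coeff_C]
  have h2 : (quadP a₂ a₁ a₀).coeff 2 = a₂ := by simp [quadP]
  simp [coordP, h, h0, h1, h2]

/-- Divisibility of the three coordinates by `w`, `w⁹` and `w¹⁷`. -/
def latticeP (e m n κ : ℂ) : Submodule (Polynomial ℂ) (Polynomial (Polynomial ℂ)) :=
  Submodule.comap (coordP e m n κ)
    (Submodule.prod (Ideal.span {Polynomial.X})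
      (Submodule.prod (Ideal.span {Polynomial.X ^ 9}) (Ideal.span {Polynomial.X ^ 17})))

lemma mem_latticeP {e m n κ : ℂ} {P : Polynomial (Polynomial ℂ)} :
    P ∈ latticeP e m n κ ↔ Polynomial.X ∣ (coordP e m n κ P).1 ∧
      Polynomial.X ^ 9 ∣ (coordP e m n κ P).2.1 ∧
      Polynomial.X ^ 17 ∣ (coordP e m n κ P).2.2 := by
  simp only [latticeP, Submodule.mem_comap, Submodule.mem_prod, Ideal.mem_span_singleton]

/-- The ideal `(g, q)` is the lattice with elementary divisors `w`, `w⁹`, `w¹⁷`. The relation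
`hκ` is the identity `β = κ α` between the coefficients of the remainder
`α w⁸ y + β w¹²` of `q` modulo `y² + n w⁴ y - e w⁸`; the two further hypotheses say that `α`
and `e - κ² + n κ` are invertible. -/
lemma mem_span_iff_mem_latticeP {e m n κ α' γ' : ℂ}
    (hκ : 3 * m ^ 2 + e * (3 - n) = κ * (6 * m + e - 3 * n + n ^ 2))
    (hα : (6 * m + e - 3 * n + n ^ 2) * α' = 1) (hγ : (e - κ ^ 2 + n * κ) * γ' = 1)
    (P : Polynomial (Polynomial ℂ)) :
    P ∈ Ideal.span {gP e n, qP m} ↔ P ∈ latticeP e m n κ := by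
  have hκ' := congrArg (Polynomial.C (R := ℂ)) hκ
  have hκC := congrArg (Polynomial.C (R := Polynomial ℂ)) hκ'
  have hα' := congrArg (Polynomial.C (R := Polynomial ℂ)) (congrArg (Polynomial.C (R := ℂ)) hα)
  have hγ' := congrArg (Polynomial.C (R := Polynomial ℂ)) (congrArg (Polynomial.C (R := ℂ)) hγ)
  simp only [map_add, map_mul, map_sub, map_pow, map_one, map_ofNat] at hκ' hκC hα' hγ'
  have hq (Q) : qP m * Q ∈ latticeP e m n κ := by
    have := coordP_apply e m n κ Q 0 0 0
    rw [mem_latticeP]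
    simp [quadP] at this
    simp [this]
  constructor
  · intro h
    obtain ⟨A, B, rfl⟩ := Ideal.mem_span_pair.mp h
    refine add_mem ?_ (by rw [mul_comm]; exact hq B)
    obtain ⟨Q, a₂, a₁, a₀, rfl⟩ := exists_quadP m A
    -- the products `g`, `y g`, `y² g` have remainders homogeneous of weights 9, 13, 17
    have h0 : gP e n ∈ latticeP e m n κ := by
      have h := coordP_apply e m n κ 0 Polynomial.X (Polynomial.C n * Polynomial.X ^ 5)
        (-(Polynomial.C e * Polynomial.X ^ 9))
      rw [show qP m * 0 + quadP _ _ _ = gP e n by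
        simp only [quadP, gP, map_neg]; ring] at h
      rw [mem_latticeP, h]
      exact ⟨dvd_rfl, ⟨0, by ring⟩, ⟨0, by ring⟩⟩
    have h1 : Polynomial.X * gP e n ∈ latticeP e m n κ := by
      have h := coordP_apply e m n κ (Polynomial.C Polynomial.X)
        ((Polynomial.C n - 3) * Polynomial.X ^ 5)
        (-((Polynomial.C e + 6 * Polynomial.C m) * Polynomial.X ^ 9))
        (-(3 * Polynomial.C m ^ 2 * Polynomial.X ^ 13))
      rw [show qP m * _ + quadP _ _ _ = Polynomial.X * gP e n by
        simp only [quadP, gP, qP, map_neg, map_mul, map_add, map_sub, map_pow, map_ofNat]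
        ring] at h
      rw [mem_latticeP, h]
      refine ⟨⟨(Polynomial.C n - 3) * Polynomial.X ^ 4, by ring⟩,
        ⟨-(Polynomial.C e + 6 * Polynomial.C m + Polynomial.C n * (Polynomial.C n - 3)),
          by ring⟩, ⟨0, ?_⟩⟩
      linear_combination (-Polynomial.X ^ 13) * hκ'
    have h2 : Polynomial.X ^ 2 * gP e n ∈ latticeP e m n κ := by
      have h := coordP_apply e m n κ
        (Polynomial.C Polynomial.X * Polynomial.X
          + Polynomial.C ((Polynomial.C n - 3) * Polynomial.X ^ 5))
        ((-(Polynomial.C e + 6 * Polynomial.C m) - 3 * (Polynomial.C n - 3)) * Polynomial.X ^ 9)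
        ((-(3 * Polynomial.C m ^ 2) - 6 * Polynomial.C m * (Polynomial.C n - 3))
          * Polynomial.X ^ 13)
        (-(3 * Polynomial.C m ^ 2 * (Polynomial.C n - 3) * Polynomial.X ^ 17))
      rw [show qP m * _ + quadP _ _ _ = Polynomial.X ^ 2 * gP e n by
        simp only [quadP, gP, qP, map_neg, map_mul, map_add, map_sub, map_pow, map_ofNat]
        ring] at h
      rw [mem_latticeP, h]
      refine ⟨⟨(-(Polynomial.C e + 6 * Polynomial.C m) - 3 * (Polynomial.C n - 3))
          * Polynomial.X ^ 8, by ring⟩,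
        ⟨((-(3 * Polynomial.C m ^ 2) - 6 * Polynomial.C m * (Polynomial.C n - 3))
          - Polynomial.C n * (-(Polynomial.C e + 6 * Polynomial.C m) - 3 * (Polynomial.C n - 3)))
          * Polynomial.X ^ 4, by ring⟩,
        ⟨-(3 * Polynomial.C m ^ 2 * (Polynomial.C n - 3))
          + Polynomial.C e * (-(Polynomial.C e + 6 * Polynomial.C m) - 3 * (Polynomial.C n - 3))
          - Polynomial.C κ * ((-(3 * Polynomial.C m ^ 2) - 6 * Polynomial.C m * (Polynomial.C n - 3))
          - Polynomial.C n * (-(Polynomial.C e + 6 * Polynomial.C m) - 3 * (Polynomial.C n - 3))),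
          by ring⟩⟩
    have hsum := add_mem (hq (Q * gP e n)) (add_mem (add_mem (Submodule.smul_mem _ a₂ h2)
      (Submodule.smul_mem _ a₁ h1)) (Submodule.smul_mem _ a₀ h0))
    convert hsum using 1
    simp only [quadP, Polynomial.smul_eq_C_mul]
    ring
  · intro h
    obtain ⟨Q, a₂, a₁, a₀, rfl⟩ := exists_quadP m P
    rw [mem_latticeP, coordP_apply] at h
    obtain ⟨⟨μ₁, h1⟩, ⟨μ₂, h2⟩, ⟨μ₃, h3⟩⟩ := h
    dsimp only at h1 h2 h3
    set I := Ideal.span {gP e n, qP m} with hI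
    have hg : gP e n ∈ I := Ideal.subset_span (by simp)
    have hqI : qP m ∈ I := Ideal.subset_span (by simp)
    -- `k = w⁹ (y + κ w⁴)` comes from the remainder of `w q` modulo `g`
    have hk : Polynomial.C (Polynomial.X ^ 9) * (Polynomial.X
        + Polynomial.C (Polynomial.C κ * Polynomial.X ^ 4)) ∈ I := by
      have hmem := I.mul_mem_left (Polynomial.C (Polynomial.C α'))
        (sub_mem (I.mul_mem_left (Polynomial.C Polynomial.X) hqI)
          (I.mul_mem_left (Polynomial.X + Polynomial.C ((3 - Polynomial.C n) * Polynomial.X ^ 4))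
            hg))
      convert hmem using 1
      simp only [gP, qP, map_mul, map_sub, map_pow, map_ofNat]
      linear_combination (-Polynomial.C Polynomial.X ^ 9 * (Polynomial.X
        + Polynomial.C (Polynomial.C κ) * Polynomial.C Polynomial.X ^ 4)) * hα'
        - Polynomial.C (Polynomial.C α') * Polynomial.C Polynomial.X ^ 13 * hκC
    -- `w¹⁷` comes from the remainder of `y k` modulo `g` and `k`
    have hw : Polynomial.C (Polynomial.X ^ 17) ∈ I := by
      have hmem := I.mul_mem_left (Polynomial.C (Polynomial.C γ'))
        (sub_mem (I.mul_mem_left (Polynomial.X - Polynomial.C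
            ((Polynomial.C κ - Polynomial.C n) * Polynomial.X ^ 4)) hk)
          (I.mul_mem_left (Polynomial.C (Polynomial.X ^ 8)) hg))
      convert hmem using 1
      simp only [gP, map_mul, map_sub, map_pow]
      linear_combination (-Polynomial.C Polynomial.X ^ 17) * hγ'
    have hsum := add_mem (I.mul_mem_left Q hqI) (add_mem (add_mem
      (I.mul_mem_left (Polynomial.C μ₁) hg) (I.mul_mem_left (Polynomial.C μ₂) hk))
      (I.mul_mem_left (Polynomial.C μ₃) hw))
    convert hsum using 1
    replace h1 := congrArg (Polynomial.C (R := Polynomial ℂ)) h1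
    replace h2 := congrArg (Polynomial.C (R := Polynomial ℂ)) h2
    replace h3 := congrArg (Polynomial.C (R := Polynomial ℂ)) h3
    simp only [map_mul, map_add, map_sub, map_pow] at h1 h2 h3
    simp only [gP, quadP, map_mul, map_pow]
    linear_combination (Polynomial.X ^ 2 + Polynomial.C (Polynomial.C n) *
        Polynomial.C Polynomial.X ^ 4 * Polynomial.X
        - Polynomial.C (Polynomial.C e) * Polynomial.C Polynomial.X ^ 8) * h1
      + (Polynomial.X + Polynomial.C (Polynomial.C κ) * Polynomial.C Polynomial.X ^ 4) * h2 + h3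

/-- The coefficients of a polynomial below degree `N`. -/
def truncP (N : ℕ) : Polynomial ℂ →ₗ[ℂ] (Fin N → ℂ) :=
  LinearMap.pi fun i => Polynomial.lcoeff ℂ (i : ℕ)

lemma truncP_eq_zero_iff {N : ℕ} {P : Polynomial ℂ} :
    truncP N P = 0 ↔ Polynomial.X ^ N ∣ P := by
  rw [Polynomial.X_pow_dvd_iff, funext_iff]
  exact ⟨fun h d hd => h ⟨d, hd⟩, fun h i => h i i.2⟩

lemma truncP_surjective (N : ℕ) : Function.Surjective (truncP N) := by
  intro a
  refine ⟨Polynomial.ofFn N a, ?_⟩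
  ext i
  simp [truncP]

/-- The `ℂ`-linear map with kernel `(g, q)` onto a space of dimension `1 + 9 + 17`. -/
def residueP (e m n κ : ℂ) : Polynomial (Polynomial ℂ) →ₗ[ℂ]
    (Fin 1 → ℂ) × (Fin 9 → ℂ) × (Fin 17 → ℂ) :=
  ((truncP 1).prodMap ((truncP 9).prodMap (truncP 17))).comp
    ((coordP e m n κ).restrictScalars ℂ)

lemma residueP_eq_zero_iff {e m n κ : ℂ} {P : Polynomial (Polynomial ℂ)} :
    residueP e m n κ P = 0 ↔ P ∈ latticeP e m n κ := by
  rw [mem_latticeP]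
  simp [residueP, Prod.ext_iff, truncP_eq_zero_iff]

lemma residueP_surjective (e m n κ : ℂ) : Function.Surjective (residueP e m n κ) := by
  rintro ⟨a, b, c⟩
  obtain ⟨A, rfl⟩ := truncP_surjective _ a
  obtain ⟨B, rfl⟩ := truncP_surjective _ b
  obtain ⟨D, rfl⟩ := truncP_surjective _ c
  refine ⟨qP m * 0 + quadP A (B + Polynomial.C n * Polynomial.X ^ 4 * A)
    (D - Polynomial.C e * Polynomial.X ^ 8 * A + Polynomial.C κ * Polynomial.X ^ 4 * B), ?_⟩
  have h := coordP_apply e m n κ 0 A (B + Polynomial.C n * Polynomial.X ^ 4 * A)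
    (D - Polynomial.C e * Polynomial.X ^ 8 * A + Polynomial.C κ * Polynomial.X ^ 4 * B)
  simp only [residueP, LinearMap.comp_apply, LinearMap.coe_restrictScalars, h,
    LinearMap.prodMap_apply]
  congr 2
  · congr 1; ring
  · congr 1; ring

/-! ### Endomorphisms of a linear matrix over `S[X]` -/

/-- The `2 × 2` matrix `[[X + g, b], [c, g - X]]` over `S[X]`. -/
def linMat {S : Type*} [CommRing S] (g b c : S) : Matrix (Fin 2) (Fin 2) (Polynomial S) :=
  !![Polynomial.X + Polynomial.C g, Polynomial.C b;
     Polynomial.C c, Polynomial.C g - Polynomial.X]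

/-- Matrices over `S` commuting with `φ = [[g, -b], [c, -g]]` are of the form `α + β φ`, provided
`b` is coprime to `2 g`. -/
lemma commute_trace_zero {S : Type*} [CommRing S] [IsDomain S] {g b c : S} (hb : b ≠ 0)
    (hgb : ∀ l, b ∣ 2 * g * l → b ∣ l) {B : Matrix (Fin 2) (Fin 2) S}
    (hB : B * !![g, -b; c, -g] = !![g, -b; c, -g] * B) :
    ∃ α β : S, B = α • (1 : Matrix (Fin 2) (Fin 2) S) + β • !![g, -b; c, -g] := by
  have h00 := congrFun (congrFun hB 0) 0
  have h01 := congrFun (congrFun hB 0) 1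
  simp [Matrix.mul_apply, Fin.sum_univ_two] at h00 h01
  obtain ⟨β, hβ⟩ := hgb (B 0 1) ⟨B 1 1 - B 0 0, by linear_combination -h01⟩
  have h11 : B 1 1 = B 0 0 + 2 * g * β :=
    mul_left_cancel₀ hb (by linear_combination h01 + 2 * g * hβ)
  have h10 : B 1 0 = -(β * c) :=
    mul_left_cancel₀ hb (by linear_combination h00 - c * hβ)
  refine ⟨B 0 0 + β * g, -β, ?_⟩
  ext i j
  fin_cases i <;> fin_cases j <;> simp [hβ, h10, h11] <;> ring

/-- Over a noncommutative ring, division on the left by the monic polynomial `X - M` leaves a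
constant remainder `B`. If multiplication by `p` preserves the multiples of `X - M`, then `B`
commutes with `M`, by uniqueness of the division. -/
lemma exists_commute_remainder {N : Type*} [Ring N] [Nontrivial N] (M : N) {p Z : Polynomial N}
    (hp : p * (Polynomial.X - Polynomial.C M) = (Polynomial.X - Polynomial.C M) * Z) :
    ∃ (B : N) (Y : Polynomial N),
      p = Polynomial.C B + (Polynomial.X - Polynomial.C M) * Y ∧ B * M = M * B := by
  set k : Polynomial N := Polynomial.X - Polynomial.C M with hk
  have hkm : k.Monic := Polynomial.monic_X_sub_C _
  have hkd : k.degree = 1 := Polynomial.degree_X_sub_C _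
  obtain ⟨B, hB⟩ : ∃ B, p %ₘ k = Polynomial.C B := by
    have h := Polynomial.degree_modByMonic_lt p hkm
    rw [hkd] at h
    exact ⟨_, Polynomial.eq_C_of_degree_le_zero (Order.le_of_lt_succ h)⟩
  have hdiv := Polynomial.modByMonic_add_div p k
  rw [hB] at hdiv
  refine ⟨B, p /ₘ k, hdiv.symm, ?_⟩
  have h1 : Polynomial.C (M * B - B * M) + k * (Polynomial.C B + (p /ₘ k) * k) = k * Z := by
    have h3 : Polynomial.C (M * B - B * M) + k * Polynomial.C B = Polynomial.C B * k := by
      rw [hk, sub_mul, mul_sub, ← Polynomial.X_mul_C, map_sub, map_mul, map_mul]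
      abel
    rw [mul_add, ← add_assoc, h3, ← mul_assoc, ← add_mul, hdiv, hp]
  have h2 := (Polynomial.div_modByMonic_unique _ _ hkm ⟨h1, by
    rw [hkd]; exact lt_of_le_of_lt Polynomial.degree_C_le (by norm_num)⟩).2
  rw [Polynomial.self_mul_modByMonic hkm] at h2
  exact (sub_eq_zero.mp (Polynomial.C_injective (by rw [← h2, map_zero]))).symm

/-- If `f₀` preserves the image of `linMat g b c`, it acts on the cokernel as a scalar. -/
lemma exists_scalar_add_linMat_mul {S : Type*} [CommRing S] [IsDomain S] {g b c : S} (hb : b ≠ 0)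
    (hgb : ∀ l, b ∣ 2 * g * l → b ∣ l) {f₀ f₁ : Matrix (Fin 2) (Fin 2) (Polynomial S)}
    (hf : linMat g b c * f₁ = f₀ * linMat g b c) :
    ∃ (r : Polynomial S) (Y : Matrix (Fin 2) (Fin 2) (Polynomial S)),
      f₀ = r • (1 : Matrix (Fin 2) (Fin 2) (Polynomial S)) + linMat g b c * Y := by
  set J : Matrix (Fin 2) (Fin 2) (Polynomial S) := !![1, 0; 0, -1] with hJ
  have hJJ : J * J = 1 := by
    ext i j; fin_cases i <;> fin_cases j <;> simp [hJ]
  set φ : Matrix (Fin 2) (Fin 2) S := !![g, -b; c, -g] with hφ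
  have hK : linMat g b c * J = Matrix.charmatrix (-φ) := by
    ext1 i j
    fin_cases i <;> fin_cases j <;> simp [linMat, hJ, hφ, Matrix.charmatrix]
  have hK' : linMat g b c = Matrix.charmatrix (-φ) * J := by
    rw [← hK, mul_assoc, hJJ, mul_one]
  have hfK : f₀ * Matrix.charmatrix (-φ) = Matrix.charmatrix (-φ) * (J * f₁ * J) := by
    rw [← hK, ← mul_assoc, ← hf]
    simp only [mul_assoc]
    rw [← mul_assoc J J, hJJ, one_mul]
  have hp := congrArg matPolyEquiv hfK
  rw [map_mul, map_mul, Matrix.matPolyEquiv_charmatrix] at hp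
  obtain ⟨B, Q, hdiv, hcomm⟩ := exists_commute_remainder (-φ) hp
  rw [mul_neg, neg_mul, neg_inj] at hcomm
  obtain ⟨α, β, hαβ⟩ := commute_trace_zero hb hgb hcomm
  have hf₀ : f₀ = B.map Polynomial.C
      + Matrix.charmatrix (-φ) * matPolyEquiv.symm Q := by
    apply matPolyEquiv.injective
    rw [map_add, map_mul, matPolyEquiv_map_C, Matrix.matPolyEquiv_charmatrix, AlgEquiv.apply_symm_apply]
    exact hdiv
  -- `α + β φ = (α - β X) + β (X + φ)`
  refine ⟨Polynomial.C α - Polynomial.C β * Polynomial.X,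
    J * matPolyEquiv.symm Q + Polynomial.C β • J, ?_⟩
  rw [mul_add, ← mul_assoc, hK, Matrix.mul_smul, hK, hf₀, hαβ, ← add_assoc, add_right_comm]
  congr 1
  ext1 i j
  fin_cases i <;> fin_cases j <;> simp [hφ, Matrix.charmatrix] <;> ring

/-! ### The matrix over `ℂ[u,v,x,y]` -/

/-- The isomorphism `ℂ[u,v,x,y] ≃ ℂ[u,x,y][v]`. -/
def splitV : R4 ≃ₐ[ℂ] Polynomial (MvPolynomial (Fin 3) ℂ) :=
  (renameEquiv ℂ (Equiv.swap (0 : Fin 4) 1)).trans (finSuccEquiv ℂ 3)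

lemma splitV_u : splitV u = Polynomial.C (X 0) := by
  have h : Equiv.swap (0 : Fin 4) 1 0 = Fin.succ (0 : Fin 3) := by decide
  simp only [splitV, u, AlgEquiv.trans_apply, renameEquiv_apply, rename_X, h, finSuccEquiv_X_succ]

lemma splitV_v : splitV v = Polynomial.X := by
  have h : Equiv.swap (0 : Fin 4) 1 1 = 0 := by decide
  simp only [splitV, v, AlgEquiv.trans_apply, renameEquiv_apply, rename_X, h, finSuccEquiv_X_zero]

lemma splitV_x : splitV x = Polynomial.C (X 1) := by
  have h : Equiv.swap (0 : Fin 4) 1 2 = Fin.succ (1 : Fin 3) := by decide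
  simp only [splitV, x, AlgEquiv.trans_apply, renameEquiv_apply, rename_X, h, finSuccEquiv_X_succ]

lemma splitV_y : splitV y = Polynomial.C (X 2) := by
  have h : Equiv.swap (0 : Fin 4) 1 3 = Fin.succ (2 : Fin 3) := by decide
  simp only [splitV, y, AlgEquiv.trans_apply, renameEquiv_apply, rename_X, h, finSuccEquiv_X_succ]

lemma splitV_C (a : ℂ) : splitV (C a) = Polynomial.C (C a) := by
  rw [← MvPolynomial.algebraMap_eq, AlgEquiv.commutes]
  rfl

/-- The `v`-free part `g` of the diagonal entries of `d¹`, in `ℂ[u,x,y]`. -/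
def gS (s t : ℂ) : MvPolynomial (Fin 3) ℂ :=
  - C ((t^2 - 10*t + 19)/2) * (C s * X 0) ^ 9 + C (t - 2) * X 2 * (C s * X 0) ^ 5
    + X 2 ^ 2 * (C s * X 0)

/-- The polynomial `p = (2t - 5) (s u)⁶ + y (s u)²` with `b = p - x`, in `ℂ[u,x,y]`. -/
def pS (s t : ℂ) : MvPolynomial (Fin 3) ℂ :=
  C (2*t - 5) * (C s * X 0) ^ 6 + X 2 * (C s * X 0) ^ 2

lemma splitV_dE7 (s t : ℂ) : splitV.toRingEquiv.mapMatrix (dE7 s t) =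
    linMat (gS s t) (pS s t - X 1)
      (X 1 ^ 2 + X 1 * pS s t + pS s t ^ 2 + X 2 ^ 3) := by
  ext1 i j
  fin_cases i <;> fin_cases j <;>
    simp [dE7, linMat, gS, pS, splitV_u, splitV_v, splitV_x, splitV_y, splitV_C,
      -algHom_C, map_ofNat C, map_ofNat Polynomial.C, map_ofNat splitV] <;> ring

lemma gS_ne_zero {s : ℂ} (hs : s ≠ 0) (t : ℂ) : gS s t ≠ 0 := by
  intro h
  have h0 := congrArg (eval ![s⁻¹, 0, 0]) h
  have h1 := congrArg (eval ![s⁻¹, 0, 1]) h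
  have h2 := congrArg (eval ![s⁻¹, 0, -1]) h
  simp [gS, hs] at h0 h1 h2
  have : (2 : ℂ) = 0 := by linear_combination h1 + h2 + h0
  norm_num at this

lemma pS_sub_ne_zero (s t : ℂ) : pS s t - X 1 ≠ 0 := by
  intro h
  have h0 := congrArg (eval ![0, 1, 0]) h
  simp [pS] at h0

/-- `p - x` is prime and `g` does not involve `x`, so the two are coprime. -/
lemma dvd_of_dvd_gS_mul {s : ℂ} (hs : s ≠ 0) (t : ℂ) (l : MvPolynomial (Fin 3) ℂ)
    (h : pS s t - X 1 ∣ 2 * gS s t * l) : pS s t - X 1 ∣ l := by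
  -- the substitution `x ↦ p`
  let π : MvPolynomial (Fin 3) ℂ →ₐ[ℂ] MvPolynomial (Fin 3) ℂ := aeval ![X 0, pS s t, X 2]
  have hπp : π (pS s t) = pS s t := by simp [π, pS, algHom_C]
  have hπg : π (gS s t) = gS s t := by simp [π, gS, algHom_C]
  have hπl : π l = 0 := by
    obtain ⟨k, hk⟩ := h
    have := congrArg π hk
    rw [map_mul, map_mul, map_mul, map_sub, hπp, hπg, map_ofNat] at this
    have hx : π (X 1) = pS s t := by simp [π]
    rw [hx, sub_self, zero_mul] at this
    simpa [gS_ne_zero hs t] using this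
  have hmk : (Ideal.Quotient.mkₐ ℂ (Ideal.span {pS s t - X 1})).comp π =
      Ideal.Quotient.mkₐ ℂ (Ideal.span {pS s t - X 1}) := by
    apply MvPolynomial.algHom_ext
    intro i
    fin_cases i
    · simp [π]
    · simp only [π, AlgHom.comp_apply, aeval_X, Ideal.Quotient.mkₐ_eq_mk]
      exact Ideal.Quotient.eq.mpr (Ideal.mem_span_singleton_self _)
    · simp [π]
  have := congrArg (fun f => f l) hmk
  simp only [AlgHom.comp_apply, hπl, map_zero] at this
  exact Ideal.mem_span_singleton.mp (Ideal.Quotient.eq_zero_iff_mem.mp this.symm)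

lemma dE7_det_ne_zero (s t : ℂ) : (dE7 s t).det ≠ 0 := by
  intro h
  have h0 := congrArg (eval ![0, 1, 0, 0]) h
  simp [dE7, Matrix.det_fin_two, u, v, x, y] at h0

lemma exists_scalar_add_dE7_mul {s : ℂ} (hs : s ≠ 0) (t : ℂ)
    {f₀ f₁ : Matrix (Fin 2) (Fin 2) R4} (hf : dE7 s t * f₁ = f₀ * dE7 s t) :
    ∃ (r : R4) (Y : Matrix (Fin 2) (Fin 2) R4),
      f₀ = r • (1 : Matrix (Fin 2) (Fin 2) R4) + dE7 s t * Y ∧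
      f₁ = r • (1 : Matrix (Fin 2) (Fin 2) R4) + Y * dE7 s t := by
  obtain ⟨r, Y, h⟩ : ∃ (r : R4) (Y : Matrix (Fin 2) (Fin 2) R4),
      f₀ = r • (1 : Matrix (Fin 2) (Fin 2) R4) + dE7 s t * Y := by
    have hf' := congrArg splitV.toRingEquiv.mapMatrix hf
    rw [map_mul, map_mul, splitV_dE7] at hf'
    obtain ⟨r, Y, h⟩ := exists_scalar_add_linMat_mul (pS_sub_ne_zero s t)
      (dvd_of_dvd_gS_mul hs t) hf'
    refine ⟨splitV.symm r, splitV.toRingEquiv.mapMatrix.symm Y, ?_⟩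
    apply splitV.toRingEquiv.mapMatrix.injective
    rw [h, map_add, map_mul, splitV_dE7, RingEquiv.apply_symm_apply]
    congr 1
    ext1 i j
    by_cases hij : i = j <;> simp [hij]
  refine ⟨r, Y, h, ?_⟩
  rw [← sub_eq_zero]
  have h0 : dE7 s t * (f₁ - (r • (1 : Matrix (Fin 2) (Fin 2) R4) + Y * dE7 s t)) = 0 := by
    rw [mul_sub, hf, h, add_mul, mul_add, mul_assoc]
    simp
  have h1 := congrArg (fun M => (dE7 s t).adjugate * M) h0
  simp only [← mul_assoc, Matrix.adjugate_mul, mul_zero, smul_mul_assoc, one_mul] at h1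
  exact (smul_eq_zero.mp h1).resolve_left (dE7_det_ne_zero s t)

/-! ### Scalar endomorphisms -/

/-- Multiplication by elements of `R`, as even endomorphisms. -/
def scalarEnd (D : Matrix (Fin 2 ⊕ Fin 2) (Fin 2 ⊕ Fin 2) R4) : R4 →ₗ[ℂ] EvenEnd D where
  toFun r := ⟨r • 1, by
    refine ⟨?_, ?_, by simp⟩ <;> ext i j <;> simp [Matrix.toBlocks₁₂, Matrix.toBlocks₂₁]⟩
  map_add' r r' := Subtype.ext (add_smul r r' 1)
  map_smul' c r := Subtype.ext (smul_assoc c r 1)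

lemma smul_one_eq_fromBlocks (r : R4) :
    r • (1 : Matrix (Fin 2 ⊕ Fin 2) (Fin 2 ⊕ Fin 2) R4) = Matrix.fromBlocks (r • 1) 0 0 (r • 1) := by
  rw [← Matrix.fromBlocks_one, Matrix.fromBlocks_smul, smul_zero]

/-- Every even endomorphism is homotopic to a scalar. -/
lemma exists_scalarEnd_sub_mem {s : ℂ} (hs : s ≠ 0) (t : ℂ) (F : EvenEnd (DE7 s t)) :
    ∃ r : R4, (F : Matrix (Fin 2 ⊕ Fin 2) (Fin 2 ⊕ Fin 2) R4) - r • 1 ∈ NullHtpy (DE7 s t) := by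
  obtain ⟨F, h12, h21, hc⟩ := F
  have hF : F = Matrix.fromBlocks F.toBlocks₁₁ 0 0 F.toBlocks₂₂ := by
    conv_lhs => rw [← Matrix.fromBlocks_toBlocks F, h12, h21]
  rw [hF, DE7, Matrix.fromBlocks_multiply, Matrix.fromBlocks_multiply] at hc
  have hc' := (Matrix.fromBlocks_inj.mp hc).2.1
  simp only [mul_zero, zero_add, add_zero] at hc'
  obtain ⟨r, Y, h0, h1⟩ := exists_scalar_add_dE7_mul hs t hc'
  refine ⟨r, Matrix.fromBlocks 0 0 Y 0, Matrix.toBlocks_fromBlocks₁₁ ..,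
    Matrix.toBlocks_fromBlocks₂₂ .., ?_⟩
  dsimp only
  rw [hF, h0, h1, DE7, Matrix.fromBlocks_multiply, Matrix.fromBlocks_multiply,
    smul_one_eq_fromBlocks, sub_eq_iff_eq_add, Matrix.fromBlocks_add, Matrix.fromBlocks_add]
  simp [add_comm]

/-- A scalar is null-homotopic if and only if it lies in the ideal generated by the entries of
`d¹`. For the converse direction the polarised determinant
`A * adj X + X * adj A = (a X₁₁ + d X₀₀ - b X₁₀ - c X₀₁) • 1` yields the homotopy. -/
lemma smul_one_mem_nullHtpy (s t : ℂ) (r : R4) :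
    r • (1 : Matrix (Fin 2 ⊕ Fin 2) (Fin 2 ⊕ Fin 2) R4) ∈ NullHtpy (DE7 s t) ↔
      ∃ α β γ δ : R4, r = α * dE7 s t 0 0 + β * dE7 s t 0 1 + γ * dE7 s t 1 0
        + δ * dE7 s t 1 1 := by
  constructor
  · rintro ⟨H, h11, h22, h⟩
    have hH : H = Matrix.fromBlocks 0 H.toBlocks₁₂ H.toBlocks₂₁ 0 := by
      conv_lhs => rw [← Matrix.fromBlocks_toBlocks H, h11, h22]
    rw [hH, DE7, Matrix.fromBlocks_multiply, Matrix.fromBlocks_multiply, Matrix.fromBlocks_add,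
      smul_one_eq_fromBlocks] at h
    have h00 := congrFun (congrFun (Matrix.fromBlocks_inj.mp h).1 0) 0
    simp [Matrix.mul_apply, Fin.sum_univ_two, Matrix.adjugate_fin_two] at h00
    refine ⟨H.toBlocks₂₁ 0 0, H.toBlocks₂₁ 1 0, -H.toBlocks₁₂ 0 1, H.toBlocks₁₂ 0 0, ?_⟩
    linear_combination h00
  · rintro ⟨α, β, γ, δ, rfl⟩
    refine ⟨Matrix.fromBlocks 0 !![δ, -γ; -β, α] !![α, γ; β, δ] 0,
      Matrix.toBlocks_fromBlocks₁₁ .., Matrix.toBlocks_fromBlocks₂₂ .., ?_⟩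
    rw [DE7, Matrix.fromBlocks_multiply, Matrix.fromBlocks_multiply, Matrix.fromBlocks_add,
      smul_one_eq_fromBlocks, Matrix.fromBlocks_inj]
    rw [Matrix.eta_fin_two (dE7 s t)]
    refine ⟨?_, by simp, by simp, ?_⟩ <;> ext1 i j <;> fin_cases i <;> fin_cases j <;>
      simp [Matrix.adjugate_fin_two] <;> ring

/-! ### Elimination of `v` and `x` -/

/-- The substitution `u ↦ w / s`, `v ↦ 0`, `x ↦ y w² + (2t - 5) w⁶`, `y ↦ y`. -/
def elimVX (s t : ℂ) : R4 →ₐ[ℂ] Polynomial (Polynomial ℂ) :=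
  aeval ![Polynomial.C (Polynomial.C s⁻¹ * Polynomial.X), 0,
    Polynomial.C (Polynomial.X ^ 2) * Polynomial.X
      + Polynomial.C (Polynomial.C (2*t - 5) * Polynomial.X ^ 6), Polynomial.X]

/-- The section `w ↦ s u`, `y ↦ y` of `elimVX`. -/
def liftWY (s : ℂ) : Polynomial (Polynomial ℂ) →+* R4 :=
  Polynomial.eval₂RingHom (Polynomial.eval₂RingHom C (C s * u)) y

lemma liftWY_X (s : ℂ) : liftWY s Polynomial.X = y := by simp [liftWY]

lemma liftWY_w (s : ℂ) : liftWY s (Polynomial.C Polynomial.X) = C s * u := by simp [liftWY]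

lemma liftWY_C (s a : ℂ) : liftWY s (Polynomial.C (Polynomial.C a)) = C a := by
  simp [liftWY]

lemma elimVX_C (s t a : ℂ) : elimVX s t (C a) = Polynomial.C (Polynomial.C a) := by
  rw [← MvPolynomial.algebraMap_eq, AlgHom.commutes]; rfl

lemma elimVX_w {s : ℂ} (hs : s ≠ 0) (t : ℂ) :
    elimVX s t (C s) * elimVX s t u = Polynomial.C Polynomial.X := by
  rw [elimVX_C]
  simp only [elimVX, u, aeval_X, Matrix.cons_val_zero]
  rw [← map_mul, ← mul_assoc, ← map_mul, mul_inv_cancel₀ hs, map_one, one_mul]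

lemma elimVX_v (s t : ℂ) : elimVX s t v = 0 := by simp [elimVX, v]

lemma elimVX_x (s t : ℂ) : elimVX s t x = Polynomial.C (Polynomial.X ^ 2) * Polynomial.X
      + Polynomial.C (Polynomial.C (2*t - 5) * Polynomial.X ^ 6) := by simp [elimVX, x]

lemma elimVX_y (s t : ℂ) : elimVX s t y = Polynomial.X := by simp [elimVX, y]

lemma elimVX_surjective {s : ℂ} (hs : s ≠ 0) (t : ℂ) : Function.Surjective (elimVX s t) := by
  have h : (elimVX s t : R4 →+* _).comp (liftWY s) = RingHom.id _ := by
    apply Polynomial.ringHom_ext'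
    · apply Polynomial.ringHom_ext
      · intro a
        simp [liftWY_C, elimVX_C, -algHom_C]
      · simp [liftWY_w, elimVX_w hs, -algHom_C]
    · simp [liftWY_X, elimVX_y]
  intro P
  exact ⟨liftWY s P, congrArg (fun f => f P) h⟩

/-- The ideal generated by the entries of `d¹` is the preimage of `(g, q)`. -/
lemma elimVX_mem_iff {s : ℂ} (hs : s ≠ 0) (t : ℂ) (r : R4) :
    elimVX s t r ∈ Ideal.span {gP ((t^2 - 10*t + 19)/2) (t - 2), qP (2*t - 5)} ↔
      ∃ α β γ δ : R4, r = α * dE7 s t 0 0 + β * dE7 s t 0 1 + γ * dE7 s t 1 0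
        + δ * dE7 s t 1 1 := by
  set e := (t^2 - 10*t + 19)/2 with he
  constructor
  · intro h
    obtain ⟨P, Q, hPQ⟩ := Ideal.mem_span_pair.mp h
    let I : Ideal R4 := Ideal.span {dE7 s t 0 0, dE7 s t 0 1, dE7 s t 1 0, dE7 s t 1 1}
    have ha : dE7 s t 0 0 ∈ I := Ideal.subset_span (by simp)
    have hb : dE7 s t 0 1 ∈ I := Ideal.subset_span (by simp)
    have hc : dE7 s t 1 0 ∈ I := Ideal.subset_span (by simp)
    have hd : dE7 s t 1 1 ∈ I := Ideal.subset_span (by simp)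
    have hC2 : C (1 / 2 : ℂ) * (2 : R4) = 1 := by
      rw [← map_ofNat C, ← map_mul]; norm_num
    have hv : v ∈ I := by
      have h1 := I.mul_mem_left (C (1 / 2 : ℂ)) (sub_mem ha hd)
      convert h1 using 1
      simp only [dE7, Matrix.of_apply, Matrix.cons_val', Matrix.cons_val_zero, Matrix.cons_val_one,
        Matrix.cons_val_fin_one]
      linear_combination (-v) * hC2
    have hg : liftWY s (gP e (t - 2)) ∈ I := by
      have h1 := sub_mem ha hv
      convert h1 using 1
      simp only [gP, map_add, map_sub, map_mul, map_pow, liftWY_w, liftWY_C, liftWY_X]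
      simp [dE7, ← he]
      ring
    have hq : liftWY s (qP (2*t - 5)) ∈ I := by
      have h1 := add_mem hc (I.mul_mem_left (x + 2 * (C (2*t - 5) * (C s * u) ^ 6
        + y * (C s * u) ^ 2)) hb)
      convert h1 using 1
      simp only [qP, map_add, map_sub, map_mul, map_pow, map_ofNat, liftWY_w, liftWY_C, liftWY_X]
      simp [dE7, map_ofNat C]
      ring
    -- modulo `I`, the composite of `elimVX` and its section is the identity
    have hmk : ((Ideal.Quotient.mk I).comp (liftWY s)).comp (elimVX s t : R4 →+* _) =
        Ideal.Quotient.mk I := by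
      apply MvPolynomial.ringHom_ext
      · intro a
        simp [elimVX_C, liftWY_C, -algHom_C]
      · intro i
        simp only [RingHom.comp_apply, RingHom.coe_coe]
        rw [Ideal.Quotient.eq]
        fin_cases i
        · have h1 : liftWY s (elimVX s t u) - u = 0 := by
            simp only [elimVX, u, aeval_X, Matrix.cons_val_zero, map_mul, liftWY_C, liftWY_w]
            rw [← mul_assoc, ← map_mul, inv_mul_cancel₀ hs, map_one, one_mul, sub_self]
          exact h1 ▸ I.zero_mem
        · have h1 : liftWY s (elimVX s t v) - v = -v := by rw [elimVX_v, map_zero, zero_sub]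
          exact h1 ▸ neg_mem hv
        · have h1 : liftWY s (elimVX s t x) - x = dE7 s t 0 1 := by
            rw [elimVX_x]
            simp only [map_add, map_mul, map_pow, liftWY_C, liftWY_w, liftWY_X]
            simp [dE7]
            ring
          exact h1 ▸ hb
        · have h1 : liftWY s (elimVX s t y) - y = 0 := by rw [elimVX_y, liftWY_X, sub_self]
          exact h1 ▸ I.zero_mem
    have hr : Ideal.Quotient.mk I r = 0 := by
      rw [← hmk]
      simp only [RingHom.comp_apply, RingHom.coe_coe]
      rw [← hPQ, Ideal.Quotient.eq_zero_iff_mem, map_add, map_mul, map_mul]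
      exact add_mem (I.mul_mem_left _ hg) (I.mul_mem_left _ hq)
    have hrI : r ∈ I := Ideal.Quotient.eq_zero_iff_mem.mp hr
    simp only [I, Ideal.mem_span_insert, Ideal.mem_span_singleton'] at hrI
    obtain ⟨α, _, ⟨β, _, ⟨γ, _, ⟨δ, rfl⟩, rfl⟩, rfl⟩, rfl⟩ := hrI
    exact ⟨α, β, γ, δ, by ring⟩
  · rintro ⟨α, β, γ, δ, rfl⟩
    set J := Ideal.span {gP e (t - 2), qP (2*t - 5)}
    have hg : gP e (t - 2) ∈ J := Ideal.subset_span (by simp)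
    have hq : qP (2*t - 5) ∈ J := Ideal.subset_span (by simp)
    have ha : elimVX s t (dE7 s t 0 0) = gP e (t - 2) := by
      simp only [dE7, gP, ← he, Matrix.of_apply, Matrix.cons_val', Matrix.cons_val_zero, Matrix.cons_val_fin_one, map_add, map_sub, map_mul,
        map_pow, map_ofNat, elimVX_w hs, elimVX_v, elimVX_y]
      simp only [elimVX_C]
      ring
    have hb : elimVX s t (dE7 s t 0 1) = 0 := by
      simp only [dE7, ← he, Matrix.of_apply, Matrix.cons_val', Matrix.cons_val_zero,
        Matrix.cons_val_one, Matrix.cons_val_fin_one, map_add, map_sub, map_neg, map_mul,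
        map_pow, map_ofNat, elimVX_w hs, elimVX_x, elimVX_y]
      simp only [elimVX_C]
      ring
    have hc : elimVX s t (dE7 s t 1 0) = qP (2*t - 5) := by
      simp only [dE7, qP, ← he, Matrix.of_apply, Matrix.cons_val', Matrix.cons_val_zero,
        Matrix.cons_val_one, Matrix.cons_val_fin_one, map_add, map_sub, map_mul,
        map_pow, map_ofNat, elimVX_w hs, elimVX_x, elimVX_y]
      simp only [elimVX_C]
      ring
    have hd : elimVX s t (dE7 s t 1 1) = gP e (t - 2) := by
      simp only [dE7, gP, ← he, Matrix.of_apply, Matrix.cons_val',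
        Matrix.cons_val_one, Matrix.cons_val_fin_one, map_add, map_sub, map_neg, map_mul,
        map_pow, map_ofNat, elimVX_w hs, elimVX_v, elimVX_y]
      simp only [elimVX_C]
      ring
    simp only [map_add, map_mul, ha, hb, hc, hd, mul_zero, add_zero]
    exact add_mem (add_mem (J.mul_mem_left _ hg) (J.mul_mem_left _ hq)) (J.mul_mem_left _ hg)

theorem stmt12 (s t : ℂ) (ht : t ^ 3 - 21 * t + 37 = 0)
    (hs : s ^ 18 = 26220 * t ^ 2 + 67488 * t - 376912) :
    Module.finrank ℂ
      (↥(EvenEnd (DE7 s t)) ⧸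
        Submodule.comap (EvenEnd (DE7 s t)).subtype (NullHtpy (DE7 s t))) = 27 := by
  -- the numerical witnesses in `hs0`, `hα`, `hγ` are inverses in `ℚ[t] / (t³ - 21 t + 37)`
  have hs0 : s ≠ 0 := by
    rintro rfl
    have : (1 : ℂ) = 0 := by
      linear_combination (399 / 4 * t ^ 2 - 2109 / 4 * t + 2785 / 4) * hs
        + (2615445 * t - 7092567) * ht
    exact one_ne_zero this
  set e := (t^2 - 10*t + 19)/2 with he
  let Ω : R4 →ₗ[ℂ] (Fin 1 → ℂ) × (Fin 9 → ℂ) × (Fin 17 → ℂ) :=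
    (residueP e (2*t - 5) (t - 2) (13 - 5*t)).comp (elimVX s t).toLinearMap
  have hΩ : Function.Surjective Ω :=
    (residueP_surjective _ _ _ _).comp (elimVX_surjective hs0 t)
  have hκ : 3 * (2*t - 5) ^ 2 + e * (3 - (t - 2)) =
      (13 - 5*t) * (6 * (2*t - 5) + e - 3 * (t - 2) + (t - 2) ^ 2) := by
    rw [he]; linear_combination 7 * ht
  have hα : (6 * (2*t - 5) + e - 3 * (t - 2) + (t - 2) ^ 2)
      * (28 / 9 * t ^ 2 + 74 / 9 * t - 392 / 9) = 1 := by
    rw [he]; linear_combination (14 / 3 * t + 37/3) * ht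
  have hγ : (e - (13 - 5*t) ^ 2 + (t - 2) * (13 - 5*t))
      * (-(4916 / 3) * t ^ 2 - 4218 * t + 70664 / 3) = 1 := by
    rw [he]; linear_combination (145022 / 3 * t - 354275 / 3) * ht
  let Ψ : R4 →ₗ[ℂ] (↥(EvenEnd (DE7 s t)) ⧸
      Submodule.comap (EvenEnd (DE7 s t)).subtype (NullHtpy (DE7 s t))) :=
    (Submodule.mkQ _).comp (scalarEnd (DE7 s t))
  have hΨ : Function.Surjective Ψ := by
    intro q
    obtain ⟨F, rfl⟩ := Submodule.mkQ_surjective _ q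
    obtain ⟨r, hr⟩ := exists_scalarEnd_sub_mem hs0 t F
    refine ⟨r, Eq.symm ?_⟩
    exact (Submodule.Quotient.eq _).mpr hr
  have hker : LinearMap.ker Ψ = LinearMap.ker Ω := by
    ext r
    have h1 : Ψ r = 0 ↔ r • (1 : Matrix (Fin 2 ⊕ Fin 2) (Fin 2 ⊕ Fin 2) R4)
        ∈ NullHtpy (DE7 s t) := Submodule.Quotient.mk_eq_zero _
    have h2 : Ω r = 0 ↔ elimVX s t r ∈ latticeP e (2*t - 5) (t - 2) (13 - 5*t) :=
      residueP_eq_zero_iff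
    rw [LinearMap.mem_ker, LinearMap.mem_ker, h1, h2, smul_one_mem_nullHtpy,
      ← mem_span_iff_mem_latticeP hκ hα hγ, elimVX_mem_iff hs0]
  rw [((Ψ.quotKerEquivOfSurjective hΨ).symm.trans ((Submodule.quotEquivOfEq _ _ hker).trans
    (Ω.quotKerEquivOfSurjective hΩ))).finrank_eq]
  simp
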